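/- arXiv:0708.0400 — 2 statements merged into one kernel-verified Lean document; each statement's English description precedes it below -/
import Mathlib

section
/- Let Δ = Δ_F + ν be a Grassmann-odd second-order differential operator, where Δ_F = ((-1)^{ε_A}/2)(∂_A + F_A)E^{AB}∂_B with non-degenerate graded-skewsymmetric principal symbol E^{AB}. Then the third-order terms of the operator Δ² vanish if and only if the antibracket (f,g) = (f ∂⃖_A) E^{AB} (∂⃗_B g) satisfies the graded Jacobi identity Σ_{cycl. f,g,h} (-1)^{(ε_f+1)(ε_h+1)} (f,(g,h)) = 0; equivalently, if and only if the inverse matrix E_{AB} satisfies the closedness relation Σ_{cycl. A,B,C} (-1)^{ε_A ε_C} (∂_A E_{BC}) = 0. -/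
/-!
Write `[·,·]` for the graded commutator of operators and `Δ = Δ_F + ν`.

*Third-order terms and Jacobi.* The derived bracket `[[Δ, f], g]` is multiplication by
`(-1)^{ε_f} (f,g)` (`dbl_lap`). As `Δ` is odd, `Δ² = ½[Δ,Δ]`, and the graded Jacobi identity for
commutators writes `[[[Δ², f], g], h]` as a sum of three nested derived brackets (`triple_gcomm`).
Up to a sign this is multiplication by the Jacobiator of `f, g, h` (`triple_eq_jac`).

*Jacobi on functions and on coordinates.* Up to a sign, the Jacobiator of `f, g, h` is
`[H_f, H_g] h - H_{(f,g)} h` with the Hamiltonian vector fields `H_f = (f, ·)`. A graded commutator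
of vector fields `X^B ∂_B` is again of that form, hence determined by its values on the
coordinates, so the Jacobiator vanishes once it vanishes with a coordinate in the last slot
(`jac_of_coord`). Its cyclic invariance then reduces all three slots to coordinates.

*Coordinates and closedness.* Differentiating `E_{AB} E^{BC} = δ_A^C` shows that lowering all three
indices of the Jacobiator of the coordinates gives the cyclic sum of `∂_A E_{BC}` (`low_jac`), and
lowering an index is invertible (`eq_zero_of_low`).
-/


open scoped BigOperators

noncomputable section

/-- The sign `(-1)^p` for a parity `p : ZMod 2`, valued in `ℚ`. -/
def sgn (p : ZMod 2) : ℚ := if p = 0 then 1 else -1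

/-- A supercommutative algebra of "functions on a superdomain" with local coordinates
`coord i`, Grassmann parities `ε i`, and left partial derivatives `D i`. -/
structure SuperAlg (ι : Type) [Fintype ι] [DecidableEq ι]
    (A : Type) [Ring A] [Algebra ℚ A] where
  ε : ι → ZMod 2
  hom : ZMod 2 → Submodule ℚ A
  one_mem : (1 : A) ∈ hom 0
  mul_mem : ∀ {p q : ZMod 2} {a b : A}, a ∈ hom p → b ∈ hom q → a * b ∈ hom (p + q)
  supercomm : ∀ {p q : ZMod 2} {a b : A}, a ∈ hom p → b ∈ hom q →
    a * b = sgn (p * q) • (b * a)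
  D : ι → A →ₗ[ℚ] A
  D_mem : ∀ (i : ι) {p : ZMod 2} {a : A}, a ∈ hom p → D i a ∈ hom (p + ε i)
  D_leibniz : ∀ (i : ι) {p : ZMod 2} {a : A} (b : A), a ∈ hom p →
    D i (a * b) = D i a * b + sgn (ε i * p) • (a * D i b)
  D_comm : ∀ (i j : ι) (a : A), D i (D j a) = sgn (ε i * ε j) • D j (D i a)
  coord : ι → A
  coord_mem : ∀ i, coord i ∈ hom (ε i)
  D_coord : ∀ i j, D i (coord j) = if i = j then (1 : A) else 0

namespace SuperAlg

variable {ι : Type} [Fintype ι] [DecidableEq ι]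
variable {A : Type} [Ring A] [Algebra ℚ A]

/-- The operator of left multiplication by `f`. -/
def L (f : A) : A →ₗ[ℚ] A := LinearMap.mulLeft ℚ f

/-- The graded commutator `[T,U] = T∘U - (-1)^{pq} U∘T` of operators of parities `p`, `q`. -/
def gcomm (p q : ZMod 2) (T U : A →ₗ[ℚ] A) : A →ₗ[ℚ] A :=
  T ∘ₗ U - sgn (p * q) • (U ∘ₗ T)

variable (S : SuperAlg ι A)

/-- The bracket `(f,g) = (f ∂⃖_A) M^{AB} (∂_B g)` built from the matrix `M`,
for `f` homogeneous of parity `pf`; the right derivative is expressed through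
the left one via `f ∂⃖_A = (-1)^{ε_A (ε_f + 1)} ∂_A f`. -/
def brkt (M : ι → ι → A) (pf : ZMod 2) (f g : A) : A :=
  ∑ a, ∑ b, sgn (S.ε a * (pf + 1)) • (S.D a f * (M a b * S.D b g))

/-- The first-order operator `(x, ·)` (for Grassmann-odd `x`), built from the matrix `M`. -/
def Hop (M : ι → ι → A) (x : A) : A →ₗ[ℚ] A :=
  ∑ a, ∑ b, L (S.D a x) ∘ₗ L (M a b) ∘ₗ S.D b

/-- The Laplacian `((-1)^{ε_A}/2)(∂_A + F_A) M^{AB} ∂_B`. -/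
def lap (F : ι → A) (M : ι → ι → A) : A →ₗ[ℚ] A :=
  (1/2 : ℚ) • ∑ a, ∑ b, sgn (S.ε a) •
    ((S.D a ∘ₗ L (M a b) ∘ₗ S.D b) + (L (F a) ∘ₗ L (M a b) ∘ₗ S.D b))

/-- The curvature `R_{AB} = (∂_A F_B) - (-1)^{ε_A ε_B}(∂_B F_A)` of a line bundle
connection `F`. -/
def curv (F : ι → A) (a b : ι) : A :=
  S.D a (F b) - sgn (S.ε a * S.ε b) • S.D b (F a)

/-- The raised-index curvature `R^{AD} = E^{AB} R_{BC} E^{CD} (-1)^{ε_C}`. -/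
def curvUp (E : ι → ι → A) (F : ι → A) (a d : ι) : A :=
  ∑ b, ∑ c, sgn (S.ε c) • (E a b * (S.curv F b c * E c d))

/-- The graded Jacobi identity for the antibracket, on homogeneous functions. -/
def JacobiId (E : ι → ι → A) : Prop :=
  ∀ (pf pg ph : ZMod 2) (f g h : A),
    f ∈ S.hom pf → g ∈ S.hom pg → h ∈ S.hom ph →
      sgn ((pf + 1) * (ph + 1)) • S.brkt E pf f (S.brkt E pg g h)
      + sgn ((pg + 1) * (pf + 1)) • S.brkt E pg g (S.brkt E ph h f)
      + sgn ((ph + 1) * (pg + 1)) • S.brkt E ph h (S.brkt E pf f g) = 0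

/-- The closedness relation `Σ_{cycl. A,B,C} (-1)^{ε_A ε_C} (∂_A E_{BC}) = 0`
for the two-form with components `Einv`. -/
def ClosedId (Einv : ι → ι → A) : Prop :=
  ∀ a b c : ι,
    sgn (S.ε a * S.ε c) • S.D a (Einv b c)
    + sgn (S.ε b * S.ε a) • S.D b (Einv c a)
    + sgn (S.ε c * S.ε b) • S.D c (Einv a b) = 0

/-- The Jacobi identity `Σ_{cycl. A,B,C} (-1)^{(ε_A+1)(ε_C+1)} E^{AD} (∂_D E^{BC}) = 0`
in terms of the matrix `E^{AB}`. -/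
def EJacobiId (E : ι → ι → A) : Prop :=
  ∀ a b c : ι,
    ∑ d, (sgn ((S.ε a + 1) * (S.ε c + 1)) • (E a d * S.D d (E b c))
      + sgn ((S.ε b + 1) * (S.ε a + 1)) • (E b d * S.D d (E c a))
      + sgn ((S.ε c + 1) * (S.ε b + 1)) • (E c d * S.D d (E a b))) = 0

/-- `E` is a non-degenerate graded-skewsymmetric (2,0)-tensor with inverse `Einv`. -/
structure AntiSymp (E Einv : ι → ι → A) : Prop where
  E_mem : ∀ a b, E a b ∈ S.hom (S.ε a + S.ε b + 1)
  E_skew : ∀ a b, E a b = - sgn ((S.ε a + 1) * (S.ε b + 1)) • E b a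
  Einv_mem : ∀ a b, Einv a b ∈ S.hom (S.ε a + S.ε b + 1)
  Einv_skew : ∀ a b, Einv a b = - sgn (S.ε a * S.ε b) • Einv b a
  mul_inv : ∀ a c, ∑ b, E a b * Einv b c = if a = c then (1 : A) else 0
  inv_mul : ∀ a c, ∑ b, Einv a b * E b c = if a = c then (1 : A) else 0

/-- An operator `T` of parity `pT` is of at most first order iff all its double graded
commutators with left multiplication operators vanish. -/
def IsFirstOrder (pT : ZMod 2) (T : A →ₗ[ℚ] A) : Prop :=
  ∀ (pf pg : ZMod 2) (f g : A), f ∈ S.hom pf → g ∈ S.hom pg →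
    gcomm (pT + pf) pg (gcomm pT pf T (L f)) (L g) = 0

/-- The third-order terms of an operator `T` of parity `pT` vanish iff all its triple
graded commutators with left multiplication operators vanish. -/
def ThirdOrderVanish (pT : ZMod 2) (T : A →ₗ[ℚ] A) : Prop :=
  ∀ (pf pg ph : ZMod 2) (f g h : A),
    f ∈ S.hom pf → g ∈ S.hom pg → h ∈ S.hom ph →
      gcomm (pT + pf + pg) ph
        (gcomm (pT + pf) pg (gcomm pT pf T (L f)) (L g)) (L h) = 0

/-- `ν_F^{(0)} = ((-1)^{ε_A}/4)(∂_A + F_A/2)(E^{AB} F_B)`. -/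
def nuF0 (E : ι → ι → A) (F : ι → A) : A :=
  (1/4 : ℚ) • ∑ a, ∑ b, sgn (S.ε a) •
    (S.D a (E a b * F b) + (1/2 : ℚ) • (F a * (E a b * F b)))

/-- `ν^{(1)} = (-1)^{ε_A} (∂_B ∂_A E^{AB})`. -/
def nu1 (E : ι → ι → A) : A :=
  ∑ a, ∑ b, sgn (S.ε a) • S.D b (S.D a (E a b))

/-- `ν^{(2)} = (-1)^{ε_A ε_C} (∂_D E^{AB}) E_{BC} (∂_A E^{CD})`. -/
def nu2 (E Einv : ι → ι → A) : A :=
  ∑ a, ∑ b, ∑ c, ∑ d, sgn (S.ε a * S.ε c) •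
    (S.D d (E a b) * (Einv b c * S.D a (E c d)))

/-- `ν_F = ν_F^{(0)} + ν^{(1)}/8 - ν^{(2)}/24`. -/
def nuF (E Einv : ι → ι → A) (F : ι → A) : A :=
  S.nuF0 E F + (1/8 : ℚ) • S.nu1 E - (1/24 : ℚ) • S.nu2 E Einv

/-- The divergence `div_1 X = (-1)^{ε_A} (∂_A X^A)`. -/
def div1 (X : ι → A) : A := ∑ a, sgn (S.ε a) • S.D a (X a)

/-- A form variation (infinitesimal coordinate transformation `δΓ^A = X^A`, compared
at the same argument): an even derivation commuting with the partial derivatives. -/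
structure FormVar (X : ι → A) (δv : A →ₗ[ℚ] A) : Prop where
  deriv : ∀ a b : A, δv (a * b) = δv a * b + a * δv b
  commD : ∀ (i : ι) (a : A), δv (S.D i a) = S.D i (δv a)
  X_mem : ∀ i, X i ∈ S.hom (S.ε i)

/-- The form variation of a (2,0)-tensor `E^{AB}` under `δΓ^A = X^A`:
`δE^{AB} = (X^A ∂⃖_C) E^{CB} + E^{AC}(∂_C X^B) - X^C (∂_C E^{AB})`. -/
def VarE (X : ι → A) (δv : A →ₗ[ℚ] A) (E : ι → ι → A) : Prop :=
  ∀ a b, δv (E a b) =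
    (∑ c, sgn (S.ε c * (S.ε a + 1)) • (S.D c (X a) * E c b))
    + (∑ c, E a c * S.D c (X b))
    - ∑ c, X c * S.D c (E a b)

/-- The form variation of a line bundle connection `F_A` under `δΓ^A = X^A`:
`δF_A = -(∂_A X^B) F_B - ∂_A(div_1 X) - X^C (∂_C F_A)`. -/
def VarF (X : ι → A) (δv : A →ₗ[ℚ] A) (F : ι → A) : Prop :=
  ∀ a, δv (F a) =
    - (∑ b, S.D a (X b) * F b) - S.D a (S.div1 X) - ∑ c, X c * S.D c (F a)

/-- Khudaverdian–Voronov's odd quantity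
`ν(F¹;F²,E) = ((-1)^{ε_A}/4)(∂_A + (F¹_A+F²_A)/2)(E^{AB}(F¹_B - F²_B))`. -/
def nu12 (E : ι → ι → A) (F1 F2 : ι → A) : A :=
  (1/4 : ℚ) • ∑ a, ∑ b, sgn (S.ε a) •
    (S.D a (E a b * (F1 b - F2 b))
      + (1/2 : ℚ) • ((F1 a + F2 a) * (E a b * (F1 b - F2 b))))

/-- The odd Laplacian `Δ_ρ = ((-1)^{ε_A}/(2ρ)) ∂_A ρ E^{AB} ∂_B` for a density `ρ`
with inverse `ρinv`. -/
def lapRho (E : ι → ι → A) (ρ ρinv : A) : A →ₗ[ℚ] A :=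
  (1/2 : ℚ) • ∑ a, ∑ b, sgn (S.ε a) •
    (L ρinv ∘ₗ S.D a ∘ₗ L ρ ∘ₗ L (E a b) ∘ₗ S.D b)

/-- `ν_ρ^{(0)} = (Δ_1 √ρ)/√ρ`, where `sq = √ρ` and `sqinv = 1/√ρ`. -/
def nuRho0 (E : ι → ι → A) (sq sqinv : A) : A :=
  sqinv * (S.lap (fun _ => (0 : A)) E sq)

/-- `ν_ρ = ν_ρ^{(0)} + ν^{(1)}/8 - ν^{(2)}/24`. -/
def nuRho (E Einv : ι → ι → A) (sq sqinv : A) : A :=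
  S.nuRho0 E sq sqinv + (1/8 : ℚ) • S.nu1 E - (1/24 : ℚ) • S.nu2 E Einv

/-- Khudaverdian's operator `Δ_E = Δ_1 + ν^{(1)}/8 - ν^{(2)}/24`. -/
def lapE (E Einv : ι → ι → A) : A →ₗ[ℚ] A :=
  S.lap (fun _ => (0 : A)) E + L ((1/8 : ℚ) • S.nu1 E - (1/24 : ℚ) • S.nu2 E Einv)

/-- The reordered Christoffel symbols `Γ^A{}_{BC} = (-1)^{ε_A ε_B} Γ_B{}^A{}_C`. -/
def Gup (Gm : ι → ι → ι → A) (a b c : ι) : A := sgn (S.ε a * S.ε b) • Gm b a c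

/-- The reordered Riemann curvature tensor
`R^A{}_{BCD} = (-1)^{ε_A ε_B}(∂_B Γ^A{}_{CD}) + Γ^A{}_{BE} Γ^E{}_{CD} - (-1)^{ε_B ε_C}(B ↔ C)`,
expressed through the reordered Christoffel symbols `Gu = Γ^·{}_{··}`. -/
def riemRe (Gu : ι → ι → ι → A) (a b c d : ι) : A :=
  sgn (S.ε a * S.ε b) • S.D b (Gu a c d) + (∑ e, Gu a b e * Gu e c d)
  - sgn (S.ε b * S.ε c) •
      (sgn (S.ε a * S.ε c) • S.D c (Gu a b d) + ∑ e, Gu a c e * Gu e b d)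

/-- The Ricci tensor `R_{AB} = R^C{}_{CAB}`. -/
def ricci (Gu : ι → ι → ι → A) (a b : ι) : A := ∑ c, S.riemRe Gu c c a b

/-- The odd scalar curvature `R = R_{AB} E^{BA}`. -/
def scalarR (Gu : ι → ι → ι → A) (E : ι → ι → A) : A :=
  ∑ a, ∑ b, S.ricci Gu a b * E b a

/-- The Riemann curvature tensor
`R_{AB}{}^C{}_D = (∂_A Γ_B{}^C{}_D) + (-1)^{ε_B ε_C} Γ_A{}^C{}_E Γ^E{}_{BD} - (-1)^{ε_A ε_B}(A ↔ B)`,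
built from the Christoffel symbols `Gm = Γ_·{}^·{}_·`. -/
def riem (Gm : ι → ι → ι → A) (a b c d : ι) : A :=
  S.D a (Gm b c d) + sgn (S.ε b * S.ε c) • (∑ e, Gm a c e * S.Gup Gm e b d)
  - sgn (S.ε a * S.ε b) •
      (S.D b (Gm a c d) + sgn (S.ε a * S.ε c) • ∑ e, Gm b c e * S.Gup Gm e a d)

/-- The Christoffel symbols with three lower indices,
`Γ_{ABC} = E_{AD} Γ^D{}_{BC} (-1)^{ε_B}`, built from `Gu = Γ^·{}_{··}`. -/
def Glow (Einv : ι → ι → A) (Gu : ι → ι → ι → A) (a b c : ι) : A :=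
  sgn (S.ε b) • ∑ d, Einv a d * Gu d b c

/-- `γ_{ABC} = Γ_{ABC} - (1/3)(E_{AB} ∂⃖_C + E_{AC} ∂⃖_B (-1)^{ε_B ε_C})`. -/
def gam (Einv : ι → ι → A) (Gu : ι → ι → ι → A) (a b c : ι) : A :=
  S.Glow Einv Gu a b c
  - (1/3 : ℚ) • (sgn (S.ε c * (S.ε a + S.ε b)) • S.D c (Einv a b)
      + sgn (S.ε b * S.ε c) • (sgn (S.ε b * (S.ε a + S.ε c)) • S.D b (Einv a c)))

end SuperAlg

namespace SuperAlg

/-! ### Signs and graded commutators -/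

theorem sgn_add (p q : ZMod 2) : sgn (p + q) = sgn p * sgn q := by
  have h : ∀ p : ZMod 2, p = 0 ∨ p = 1 := by decide
  have h2 : (1 + 1 : ZMod 2) = 0 := by decide
  rcases h p with rfl | rfl <;> rcases h q with rfl | rfl <;> simp [sgn, h2]

theorem sgn_ne_zero (p : ZMod 2) : sgn p ≠ 0 := by
  unfold sgn; split_ifs <;> norm_num

theorem neg_sgn (p : ZMod 2) : -sgn p = sgn (p + 1) := by
  rw [sgn_add]; simp [sgn]

theorem sgn_smul_eq_zero {A : Type} [Ring A] [Algebra ℚ A] (p : ZMod 2) (x : A) :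
    sgn p • x = 0 ↔ x = 0 := by
  simp [sgn_ne_zero]

theorem L_eq_zero {A : Type} [Ring A] [Algebra ℚ A] (x : A) : L x = 0 ↔ x = 0 := by
  constructor
  · intro h
    simpa [L] using LinearMap.congr_fun h 1
  · rintro rfl
    ext y
    simp [L]

theorem L_mul {A : Type} [Ring A] [Algebra ℚ A] (x y : A) : L (x * y) = L x ∘ₗ L y := by
  ext z
  simp [L]

theorem L_smul {A : Type} [Ring A] [Algebra ℚ A] (c : ℚ) (x : A) : L (c • x) = c • L x := by
  ext z
  simp [L]

theorem L_add {A : Type} [Ring A] [Algebra ℚ A] (x y : A) : L (x + y) = L x + L y := by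
  ext z
  simp [L, add_mul]

theorem gcomm_smul_left {A : Type} [Ring A] [Algebra ℚ A] (p q : ZMod 2) (c : ℚ)
    (T U : A →ₗ[ℚ] A) : gcomm p q (c • T) U = c • gcomm p q T U := by
  ext z
  simp [gcomm, smul_sub, smul_comm c]

theorem gcomm_smul_right {A : Type} [Ring A] [Algebra ℚ A] (p q : ZMod 2) (c : ℚ)
    (T U : A →ₗ[ℚ] A) : gcomm p q T (c • U) = c • gcomm p q T U := by
  ext z
  simp [gcomm, smul_sub, smul_comm c]

theorem gcomm_add_left {A : Type} [Ring A] [Algebra ℚ A] (p q : ZMod 2)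
    (T T' U : A →ₗ[ℚ] A) : gcomm p q (T + T') U = gcomm p q T U + gcomm p q T' U := by
  ext z
  simp [gcomm, smul_add]
  abel

theorem gcomm_sum_left {A : Type} [Ring A] [Algebra ℚ A] {κ : Type} (s : Finset κ) (p q : ZMod 2)
    (T : κ → A →ₗ[ℚ] A) (U : A →ₗ[ℚ] A) :
    gcomm p q (∑ i ∈ s, T i) U = ∑ i ∈ s, gcomm p q (T i) U := by
  ext z
  simp [gcomm, Finset.smul_sum]

theorem gcomm_comp_left {A : Type} [Ring A] [Algebra ℚ A] (p q r : ZMod 2)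
    (T U V : A →ₗ[ℚ] A) :
    gcomm (p + q) r (T ∘ₗ U) V = T ∘ₗ gcomm q r U V + sgn (q * r) • (gcomm p r T V ∘ₗ U) := by
  ext z
  simp only [gcomm, add_mul, sgn_add, LinearMap.sub_apply, LinearMap.comp_apply,
    LinearMap.smul_apply, LinearMap.add_apply, map_sub, map_smul, smul_sub, smul_smul]
  rw [mul_comm (sgn (q * r))]
  abel

/-- The Koszul bracket `[[T, U], V]` of operators, for `T` odd and `U`, `V` of parities `p`, `q`. -/
def dbl {A : Type} [Ring A] [Algebra ℚ A] (T : A →ₗ[ℚ] A) (p q : ZMod 2)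
    (U V : A →ₗ[ℚ] A) : A →ₗ[ℚ] A :=
  gcomm (1 + p) q (gcomm 1 p T U) V

/-- Since `T² = ½[T,T]` for odd `T`, the graded Jacobi identity for commutators expresses a
triple commutator of `T²` through nested Koszul brackets. -/
theorem triple_gcomm {A : Type} [Ring A] [Algebra ℚ A] (T : A →ₗ[ℚ] A) (p q r : ZMod 2)
    (U V W : A →ₗ[ℚ] A) :
    gcomm (0 + p + q) r (gcomm (0 + p) q (gcomm 0 p (T ∘ₗ T) U) V) W =
      dbl T (p + q + 1) r (dbl T p q U V) W
      + sgn (q * (p + 1)) • dbl T q (p + r + 1) V (dbl T p r U W)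
      + sgn p • dbl T p (q + r + 1) U (dbl T q r V W) := by
  have h0 : sgn 0 = 1 := by decide
  have h1 : sgn 1 = -1 := by decide
  have h2 : (1 + 1 : ZMod 2) = 0 := by decide
  have key : ∀ p : ZMod 2, p = 0 ∨ p = 1 := by decide
  have hs : ∀ X : A →ₗ[ℚ] A, (-1 : ℚ) • X = -X := fun X => by
    ext z; simp
  simp only [dbl, gcomm, ← Module.End.mul_eq_comp]
  rcases key p with rfl | rfl <;> rcases key q with rfl | rfl <;> rcases key r with rfl | rfl <;>
    simp only [add_zero, zero_add, mul_zero, h2, h0, h1, mul_one, one_smul,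
      hs, sub_neg_eq_add, mul_add, add_mul, mul_sub, sub_mul,
      mul_assoc] <;> abel

variable {ι : Type} [Fintype ι] [DecidableEq ι] {A : Type} [Ring A] [Algebra ℚ A]
variable (S : SuperAlg ι A)

/-! ### The antibracket as a derived bracket -/

theorem smul_mem_hom {p : ZMod 2} {x : A} (c : ℚ) (h : x ∈ S.hom p) : c • x ∈ S.hom p :=
  (S.hom p).smul_mem c h

theorem mem_of_eq {p q : ZMod 2} {x : A} (h : x ∈ S.hom p) (e : p = q) : x ∈ S.hom q := e ▸ h

theorem gcomm_L_L {p q : ZMod 2} {x y : A} (hx : x ∈ S.hom p) (hy : y ∈ S.hom q) :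
    gcomm p q (L x) (L y) = 0 := by
  rw [gcomm, ← L_mul, ← L_mul, ← L_smul, ← S.supercomm hx hy, sub_self]

theorem gcomm_D_L (a : ι) {q : ZMod 2} {y : A} (hy : y ∈ S.hom q) :
    gcomm (S.ε a) q (S.D a) (L y) = L (S.D a y) := by
  ext z
  simp [gcomm, L, S.D_leibniz a z hy]

theorem brkt_mem {E : ι → ι → A} (hE : ∀ a b, E a b ∈ S.hom (S.ε a + S.ε b + 1))
    {p q : ZMod 2} {f g : A} (hf : f ∈ S.hom p) (hg : g ∈ S.hom q) :
    S.brkt E p f g ∈ S.hom (p + q + 1) := by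
  refine Submodule.sum_mem _ fun a _ => Submodule.sum_mem _ fun b _ => S.smul_mem_hom _ ?_
  refine S.mem_of_eq (S.mul_mem (S.D_mem a hf) (S.mul_mem (hE a b) (S.D_mem b hg))) ?_
  generalize S.ε a = a; generalize S.ε b = b; clear * -; decide +revert

/-- Reversing a product of three homogeneous elements. -/
theorem mul_rev {p q r : ZMod 2} {x y z : A} (hx : x ∈ S.hom p) (hy : y ∈ S.hom q)
    (hz : z ∈ S.hom r) : x * (y * z) = sgn (p * q + p * r + q * r) • (z * (y * x)) := by
  rw [S.supercomm hy hz, mul_smul_comm, ← mul_assoc, S.supercomm hx hz, smul_mul_assoc, mul_assoc,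
    S.supercomm hx hy, mul_smul_comm, smul_smul, smul_smul, ← sgn_add, ← sgn_add]
  congr 2; ring

theorem brkt_skew {E Einv : ι → ι → A} (hE : S.AntiSymp E Einv)
    {p q : ZMod 2} {f g : A} (hf : f ∈ S.hom p) (hg : g ∈ S.hom q) :
    S.brkt E p f g = -sgn ((p + 1) * (q + 1)) • S.brkt E q g f := by
  unfold brkt
  rw [Finset.sum_comm, Finset.smul_sum]
  refine Finset.sum_congr rfl fun b _ => ?_
  rw [Finset.smul_sum]
  refine Finset.sum_congr rfl fun a _ => ?_
  rw [S.mul_rev (S.D_mem a hf) (hE.E_mem a b) (S.D_mem b hg), hE.E_skew a b]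
  simp only [smul_mul_assoc, mul_smul_comm, smul_smul, neg_sgn, ← sgn_add]
  congr 2
  clear hf hg
  generalize S.ε a = a; generalize S.ε b = b; revert p q a b; decide

theorem brkt_smul_right (E : ι → ι → A) (p : ZMod 2) (c : ℚ) (f g : A) :
    S.brkt E p f (c • g) = c • S.brkt E p f g := by
  simp only [brkt, map_smul, mul_smul_comm, Finset.smul_sum, smul_comm c]

theorem brkt_smul_left (E : ι → ι → A) (p : ZMod 2) (c : ℚ) (f g : A) :
    S.brkt E p (c • f) g = c • S.brkt E p f g := by
  simp only [brkt, map_smul, smul_mul_assoc, Finset.smul_sum, smul_comm c]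

/-- The Koszul bracket of `Δ_F + ν` on multiplication operators is, up to the sign
`(-1)^{ε_f}`, multiplication by the antibracket: neither `F`
nor `ν` contributes, and the two halves of the symmetrised symbol agree by skewsymmetry. -/
theorem dbl_lap {E Einv : ι → ι → A} {F : ι → A} {ν : A}
    (hE : S.AntiSymp E Einv) (hF : ∀ a, F a ∈ S.hom (S.ε a)) (hν : ν ∈ S.hom 1)
    {p q : ZMod 2} {f g : A} (hf : f ∈ S.hom p) (hg : g ∈ S.hom q) :
    dbl (S.lap F E + L ν) p q (L f) (L g) = sgn p • L (S.brkt E p f g) := by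
  have two (x : ZMod 2) : x + x = 0 := by revert x; decide
  have h1 : ∀ a b, gcomm (1 + p) q (gcomm 1 p (S.D a ∘ₗ L (E a b) ∘ₗ S.D b) (L f)) (L g)
      = sgn (q * (S.ε a + p + 1)) • L (S.D a g * (E a b * S.D b f))
        + sgn (p * (S.ε a + 1)) • L (S.D a f * (E a b * S.D b g)) := by
    intro a b
    have e1 : (1 : ZMod 2) = S.ε a + ((S.ε a + S.ε b + 1) + S.ε b) := by
      generalize S.ε a = a; generalize S.ε b = b; revert a b; decide
    have i1 : gcomm 1 p (S.D a ∘ₗ L (E a b) ∘ₗ S.D b) (L f)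
        = S.D a ∘ₗ L (E a b * S.D b f)
          + sgn (p * (S.ε a + 1)) • (L (S.D a f * E a b) ∘ₗ S.D b) := by
      rw [e1, gcomm_comp_left, gcomm_comp_left, S.gcomm_D_L b hf, S.gcomm_L_L (hE.E_mem a b) hf,
        S.gcomm_D_L a hf, L_mul, L_mul, LinearMap.zero_comp, smul_zero, add_zero,
        LinearMap.comp_assoc]
      congr 3
      generalize S.ε a = a; generalize S.ε b = b; clear * -; decide +revert
    have m1 := S.mul_mem (hE.E_mem a b) (S.D_mem b hf)
    have m2 := S.mul_mem (S.D_mem a hf) (hE.E_mem a b)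
    have e2 : 1 + p = S.ε a + (S.ε a + S.ε b + 1 + (p + S.ε b)) := by
      generalize S.ε a = a; generalize S.ε b = b; clear * -; decide +revert
    have e3 : 1 + p = (p + S.ε a + (S.ε a + S.ε b + 1)) + S.ε b := by
      generalize S.ε a = a; generalize S.ε b = b; clear * -; decide +revert
    rw [i1, gcomm_add_left, gcomm_smul_left]
    congr 1
    · rw [e2, gcomm_comp_left, S.gcomm_L_L m1 hg, S.gcomm_D_L a hg, ← L_mul, LinearMap.comp_zero,
        zero_add]
      congr 2
      generalize S.ε a = a; generalize S.ε b = b; clear * -; decide +revert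
    · rw [e3, gcomm_comp_left, S.gcomm_L_L m2 hg, S.gcomm_D_L b hg, ← L_mul, LinearMap.zero_comp,
        smul_zero, add_zero, mul_assoc]
  have h2 : ∀ a b, gcomm (1 + p) q (gcomm 1 p (L (F a) ∘ₗ L (E a b) ∘ₗ S.D b) (L f)) (L g) = 0 := by
    intro a b
    have m := S.mul_mem (hF a) (hE.E_mem a b)
    have e1 : (1 : ZMod 2) = (S.ε a + (S.ε a + S.ε b + 1)) + S.ε b := by
      generalize S.ε a = a; generalize S.ε b = b; revert a b; decide
    have i1 : gcomm 1 p (L (F a) ∘ₗ L (E a b) ∘ₗ S.D b) (L f) = L (F a * E a b * S.D b f) := by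
      rw [← LinearMap.comp_assoc, ← L_mul, e1, gcomm_comp_left, S.gcomm_L_L m hf, S.gcomm_D_L b hf,
        LinearMap.zero_comp, smul_zero, add_zero, ← L_mul]
    rw [i1]
    refine S.gcomm_L_L (S.mem_of_eq (S.mul_mem m (S.D_mem b hf)) ?_) hg
    generalize S.ε a = a; generalize S.ε b = b; clear * -; decide +revert
  have h3 : gcomm (1 + p) q (gcomm 1 p (L ν) (L f)) (L g) = 0 := by
    rw [S.gcomm_L_L hν hf]
    simp [gcomm]
  have h4 : dbl (S.lap F E + L ν) p q (L f) (L g)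
      = (1/2 : ℚ) • (sgn (p * q + q) • L (S.brkt E q g f) + sgn p • L (S.brkt E p f g)) := by
    rw [dbl, gcomm_add_left, gcomm_add_left, h3, add_zero, lap, gcomm_smul_left, gcomm_smul_left]
    simp only [gcomm_sum_left, gcomm_smul_left, gcomm_add_left, h1, h2, add_zero]
    congr 1
    ext x
    simp only [brkt, L, LinearMap.sum_apply, LinearMap.add_apply, LinearMap.smul_apply,
      LinearMap.mulLeft_apply, Finset.sum_mul, Finset.smul_sum, smul_add,
      ← Finset.sum_add_distrib, smul_mul_assoc, smul_smul, ← sgn_add]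
    refine Finset.sum_congr rfl fun a _ => Finset.sum_congr rfl fun b _ => ?_
    congr 3 <;>
    · generalize S.ε a = a; clear * -; decide +revert
  have h5 : p * q + q + ((q + 1) * (p + 1) + 1) = p := by
    clear * -; decide +revert
  rw [h4, S.brkt_skew hE hg hf, L_smul, smul_smul, neg_sgn, ← sgn_add, h5, ← add_smul, smul_smul]
  congr 1
  ring

/-! ### Third-order terms and the Jacobiator -/

/-- The left-hand side of the graded Jacobi identity. -/
def jac (E : ι → ι → A) (pf pg ph : ZMod 2) (f g h : A) : A :=
  sgn ((pf + 1) * (ph + 1)) • S.brkt E pf f (S.brkt E pg g h)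
      + sgn ((pg + 1) * (pf + 1)) • S.brkt E pg g (S.brkt E ph h f)
      + sgn ((ph + 1) * (pg + 1)) • S.brkt E ph h (S.brkt E pf f g)

theorem jac_cycl (E : ι → ι → A) (pf pg ph : ZMod 2) (f g h : A) :
    S.jac E pf pg ph f g h = S.jac E pg ph pf g h f := by
  unfold jac
  abel

/-- The Jacobiator in Leibniz form, in which it is an operator acting on its last argument. -/
theorem jac_eq {E Einv : ι → ι → A} (hE : S.AntiSymp E Einv)
    {pf pg ph : ZMod 2} {f g h : A} (hf : f ∈ S.hom pf) (hg : g ∈ S.hom pg) (hh : h ∈ S.hom ph) :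
    S.jac E pf pg ph f g h = sgn ((pf + 1) * (ph + 1)) •
      (S.brkt E pf f (S.brkt E pg g h)
        - sgn ((pf + 1) * (pg + 1)) • S.brkt E pg g (S.brkt E pf f h)
        - S.brkt E (pf + pg + 1) (S.brkt E pf f g) h) := by
  rw [jac, S.brkt_skew hE hh hf, brkt_smul_right, S.brkt_skew hE hh (S.brkt_mem hE.E_mem hf hg)]
  simp only [smul_smul, sub_eq_add_neg, smul_neg, ← neg_smul, neg_sgn, ← sgn_add, smul_add]
  congr 3
  · congr 1
    clear * -; decide +revert
  · clear * -; decide +revert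

theorem triple_eq_jac {E Einv : ι → ι → A} {F : ι → A} {ν : A}
    (hE : S.AntiSymp E Einv) (hF : ∀ a, F a ∈ S.hom (S.ε a)) (hν : ν ∈ S.hom 1)
    {p q r : ZMod 2} {f g h : A} (hf : f ∈ S.hom p) (hg : g ∈ S.hom q) (hh : h ∈ S.hom r) :
    gcomm (0 + p + q) r (gcomm (0 + p) q (gcomm 0 p
      ((S.lap F E + L ν) ∘ₗ (S.lap F E + L ν)) (L f)) (L g)) (L h)
      = sgn ((p + 1) * (r + 1) + q) • L (S.jac E p q r f g h) := by
  have hfg := S.brkt_mem hE.E_mem hf hg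
  have hfh := S.brkt_mem hE.E_mem hf hh
  have hgh := S.brkt_mem hE.E_mem hg hh
  rw [triple_gcomm, S.dbl_lap hE hF hν hf hg, S.dbl_lap hE hF hν hf hh, S.dbl_lap hE hF hν hg hh]
  simp only [← L_smul]
  rw [S.dbl_lap hE hF hν (S.smul_mem_hom _ hfg) hh, S.dbl_lap hE hF hν hg (S.smul_mem_hom _ hfh),
    S.dbl_lap hE hF hν hf (S.smul_mem_hom _ hgh)]
  rw [brkt_smul_left, brkt_smul_right, brkt_smul_right, S.jac_eq hE hf hg hh]
  simp only [← L_smul, ← L_add, smul_sub, smul_smul]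
  congr 1
  simp only [sub_eq_add_neg, ← neg_smul, ← sgn_add, neg_sgn]
  have rev : ∀ a b c : A, a + b + c = c + b + a := fun a b c => by abel
  rw [rev]
  congr 1
  · congr 1 <;> congr 2 <;> clear * - <;> decide +revert
  congr 2
  clear * -; decide +revert

/-! ### Reduction of the Jacobi identity to coordinates -/

/-- The vector field `∑_b X^b ∂_b`. -/
def vf (X : ι → A) : A →ₗ[ℚ] A := ∑ b, L (X b) ∘ₗ S.D b

theorem vf_apply (X : ι → A) (x : A) : S.vf X x = ∑ b, X b * S.D b x := by
  simp [vf, L]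

theorem vf_coord (X : ι → A) (c : ι) : S.vf X (S.coord c) = X c := by
  simp [vf_apply, S.D_coord]

theorem vf_gcomm {p q : ZMod 2} {X Y : ι → A} (hX : ∀ a, X a ∈ S.hom (p + S.ε a))
    (hY : ∀ a, Y a ∈ S.hom (q + S.ε a)) (x : A) :
    S.vf X (S.vf Y x) - sgn (p * q) • S.vf Y (S.vf X x)
      = S.vf (fun b => S.vf X (Y b) - sgn (p * q) • S.vf Y (X b)) x := by
  have expand : ∀ {q : ZMod 2} {X Y : ι → A}, (∀ a, Y a ∈ S.hom (q + S.ε a)) →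
      S.vf X (S.vf Y x) = (∑ b, S.vf X (Y b) * S.D b x)
        + ∑ a, ∑ b, sgn (S.ε a * (q + S.ε b)) • (X a * (Y b * S.D a (S.D b x))) := by
    intro q X Y hY
    simp only [vf_apply S X, Finset.sum_mul]
    rw [Finset.sum_comm (f := fun b a => X a * S.D a (Y b) * S.D b x), ← Finset.sum_add_distrib]
    refine Finset.sum_congr rfl fun a _ => ?_
    rw [← Finset.sum_add_distrib, vf_apply, map_sum, Finset.mul_sum]
    refine Finset.sum_congr rfl fun b _ => ?_
    rw [S.D_leibniz a _ (hY b), mul_add, mul_assoc, mul_smul_comm]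
  -- the second-order parts of the two products cancel
  have second : (∑ a, ∑ b, sgn (S.ε a * (q + S.ε b)) • (X a * (Y b * S.D a (S.D b x))))
      = sgn (p * q) • ∑ b, ∑ a, sgn (S.ε b * (p + S.ε a)) • (Y b * (X a * S.D b (S.D a x))) := by
    rw [Finset.sum_comm, Finset.smul_sum]
    refine Finset.sum_congr rfl fun b _ => ?_
    rw [Finset.smul_sum]
    refine Finset.sum_congr rfl fun a _ => ?_
    rw [S.D_comm a b, ← mul_assoc, S.supercomm (hX a) (hY b)]
    simp only [smul_mul_assoc, mul_smul_comm, smul_smul, ← sgn_add, mul_assoc]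
    congr 2
    generalize S.ε a = a; generalize S.ε b = b; clear * -; decide +revert
  rw [expand hY, expand hX, second, vf_apply S (fun b => _)]
  simp only [sub_mul, Finset.sum_sub_distrib, smul_mul_assoc, ← Finset.smul_sum, smul_add]
  abel

theorem brkt_eq_vf (E : ι → ι → A) (p : ZMod 2) (f g : A) :
    S.brkt E p f g = S.vf (fun b => S.brkt E p f (S.coord b)) g := by
  rw [vf_apply, brkt, Finset.sum_comm]
  refine Finset.sum_congr rfl fun b _ => ?_
  simp [brkt, S.D_coord, Finset.sum_mul, mul_assoc]

/-- In Leibniz form the Jacobiator is a vector field acting on its last argument, so it vanishes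
as soon as it vanishes when that argument is a coordinate. -/
theorem jac_of_coord {E Einv : ι → ι → A} (hE : S.AntiSymp E Einv)
    {pf pg ph : ZMod 2} {f g h : A} (hf : f ∈ S.hom pf) (hg : g ∈ S.hom pg) (hh : h ∈ S.hom ph)
    (H : ∀ c, S.jac E pf pg (S.ε c) f g (S.coord c) = 0) : S.jac E pf pg ph f g h = 0 := by
  have mem : ∀ {p : ZMod 2} {f : A}, f ∈ S.hom p → ∀ b,
      S.brkt E p f (S.coord b) ∈ S.hom ((p + 1) + S.ε b) := fun hf b =>
    S.mem_of_eq (S.brkt_mem hE.E_mem hf (S.coord_mem b)) (by ring)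
  have W : ∀ x, S.brkt E pf f (S.brkt E pg g x)
      - sgn ((pf + 1) * (pg + 1)) • S.brkt E pg g (S.brkt E pf f x)
      - S.brkt E (pf + pg + 1) (S.brkt E pf f g) x = S.vf (fun c =>
        S.brkt E pf f (S.brkt E pg g (S.coord c))
      - sgn ((pf + 1) * (pg + 1)) • S.brkt E pg g (S.brkt E pf f (S.coord c))
      - S.brkt E (pf + pg + 1) (S.brkt E pf f g) (S.coord c)) x := by
    intro x
    have := S.vf_gcomm (mem hf) (mem hg) x
    simp only [← brkt_eq_vf] at this
    rw [this, S.brkt_eq_vf E (pf + pg + 1) _ x]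
    simp only [vf_apply, sub_mul, Finset.sum_sub_distrib]
  have Z : ∀ c, S.brkt E pf f (S.brkt E pg g (S.coord c))
      - sgn ((pf + 1) * (pg + 1)) • S.brkt E pg g (S.brkt E pf f (S.coord c))
      - S.brkt E (pf + pg + 1) (S.brkt E pf f g) (S.coord c) = 0 := by
    intro c
    have := H c
    rwa [S.jac_eq hE hf hg (S.coord_mem c), sgn_smul_eq_zero] at this
  rw [S.jac_eq hE hf hg hh, W]
  simp only [Z, vf_apply, zero_mul, Finset.sum_const_zero, smul_zero]

theorem brkt_coord (E : ι → ι → A) (a : ι) (g : A) :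
    S.brkt E (S.ε a) (S.coord a) g = ∑ d, E a d * S.D d g := by
  have : sgn (S.ε a * (S.ε a + 1)) = 1 := by
    generalize S.ε a = a; revert a; decide
  simp [brkt, S.D_coord, this]

theorem jac_coord (E : ι → ι → A) (a b c : ι) :
    S.jac E (S.ε a) (S.ε b) (S.ε c) (S.coord a) (S.coord b) (S.coord c)
      = ∑ d, (sgn ((S.ε a + 1) * (S.ε c + 1)) • (E a d * S.D d (E b c))
      + sgn ((S.ε b + 1) * (S.ε a + 1)) • (E b d * S.D d (E c a))
      + sgn ((S.ε c + 1) * (S.ε b + 1)) • (E c d * S.D d (E a b))) := by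
  have h : ∀ a b, S.brkt E (S.ε a) (S.coord a) (S.coord b) = E a b := by
    intro a b
    simp [brkt_coord, S.D_coord]
  rw [jac, h, h, h]
  simp only [brkt_coord, Finset.smul_sum, Finset.sum_add_distrib]

/-- Cyclic invariance of the Jacobiator lets its three arguments be replaced by coordinates one
after another. -/
theorem jacobi_iff_ejacobi {E Einv : ι → ι → A} (hE : S.AntiSymp E Einv) :
    S.JacobiId E ↔ S.EJacobiId E := by
  constructor
  · intro H a b c
    rw [← jac_coord]
    exact H _ _ _ _ _ _ (S.coord_mem a) (S.coord_mem b) (S.coord_mem c)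
  · intro H
    have h0 : ∀ a b c,
        S.jac E (S.ε a) (S.ε b) (S.ε c) (S.coord a) (S.coord b) (S.coord c) = 0 := by
      intro a b c
      rw [jac_coord]
      exact H a b c
    have h1 : ∀ a b {p : ZMod 2} {f : A}, f ∈ S.hom p →
        S.jac E (S.ε b) p (S.ε a) (S.coord b) f (S.coord a) = 0 := by
      intro a b p f hf
      rw [← jac_cycl]
      exact S.jac_of_coord hE (S.coord_mem a) (S.coord_mem b) hf (h0 a b)
    have h2 : ∀ b {p q : ZMod 2} {f g : A}, f ∈ S.hom p → g ∈ S.hom q →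
        S.jac E p q (S.ε b) f g (S.coord b) = 0 := by
      intro b p q f g hf hg
      rw [← jac_cycl]
      exact S.jac_of_coord hE (S.coord_mem b) hf hg fun a => h1 a b hf
    intro pf pg ph f g h hf hg hh
    exact S.jac_of_coord hE hf hg hh fun c => h2 c hf hg

/-! ### Closedness of the inverse matrix -/

/-- Differentiating `∑_q E_{bq} E^{qr} = δ_b^r` expresses `∂_a E_{bc}` through `∂_a E^{qr}`. -/
theorem D_Einv {E Einv : ι → ι → A} (hE : S.AntiSymp E Einv) (a b c : ι) :
    S.D a (Einv b c) = ∑ q, ∑ r,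
      sgn (S.ε a * (S.ε b + S.ε q + 1) + S.ε r * S.ε c
        + (S.ε c + S.ε r + 1) * (S.ε a + S.ε q + S.ε r + 1)) •
      (Einv b q * (Einv c r * S.D a (E q r))) := by
  have D1 : S.D a 1 = 0 := by
    have := S.D_leibniz a 1 S.one_mem
    simpa [sgn] using this
  have h : ∀ r, ∑ q, S.D a (Einv b q) * E q r
      = -∑ q, sgn (S.ε a * (S.ε b + S.ε q + 1)) • (Einv b q * S.D a (E q r)) := by
    intro r
    have := congrArg (S.D a) (hE.inv_mul b r)
    have h0 : S.D a (if b = r then (1 : A) else 0) = 0 := by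
      split_ifs
      · exact D1
      · exact map_zero _
    rw [h0, map_sum] at this
    rw [← add_eq_zero_iff_eq_neg, ← Finset.sum_add_distrib, ← this]
    exact Finset.sum_congr rfl fun q _ => (S.D_leibniz a _ (hE.Einv_mem b q)).symm
  calc S.D a (Einv b c) = ∑ r, (∑ q, S.D a (Einv b q) * E q r) * Einv r c := by
        simp only [Finset.sum_mul]
        rw [Finset.sum_comm]
        simp only [mul_assoc, ← Finset.mul_sum, hE.mul_inv]
        simp
    _ = _ := by
        rw [Finset.sum_comm (f := fun q r => _ • _)]
        refine Finset.sum_congr rfl fun r _ => ?_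
        rw [h, neg_mul, Finset.sum_mul, ← Finset.sum_neg_distrib]
        refine Finset.sum_congr rfl fun q _ => ?_
        rw [hE.Einv_skew r c, smul_mul_assoc, mul_assoc, mul_smul_comm,
          S.supercomm (S.D_mem a (hE.E_mem q r)) (hE.Einv_mem c r)]
        simp only [mul_smul_comm, smul_smul, neg_sgn, ← sgn_add, ← neg_smul]
        congr 2
        generalize S.ε a = a; generalize S.ε b = b; generalize S.ε c = c
        generalize S.ε q = q; generalize S.ε r = r
        clear * -; decide +revert

/-- The sign with which the three indices `p q r` are lowered to `a b c`. -/
def lowSgn (a b c p q r : ι) : ℚ :=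
  sgn ((S.ε p + 1) * (S.ε q + 1) + (S.ε q + 1) * (S.ε r + 1) + (S.ε p + 1) * (S.ε b + S.ε c)
    + (S.ε q + 1) * S.ε c + S.ε a * S.ε c)

theorem low_cycl {E Einv : ι → ι → A} (hE : S.AntiSymp E Einv) (a b c p q r : ι) (x : A) :
    S.lowSgn a b c p q r • (Einv a p * (Einv b q * (Einv c r * x)))
      = S.lowSgn b c a q r p • (Einv b q * (Einv c r * (Einv a p * x))) := by
  rw [← mul_assoc (Einv b q) (Einv c r) x, ← mul_assoc (Einv a p),
    S.supercomm (hE.Einv_mem a p) (S.mul_mem (hE.Einv_mem b q) (hE.Einv_mem c r)),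
    smul_mul_assoc, smul_smul, mul_assoc, mul_assoc, lowSgn, lowSgn, ← sgn_add]
  congr 2
  generalize S.ε a = a; generalize S.ε b = b; generalize S.ε c = c
  generalize S.ε p = p; generalize S.ε q = q; generalize S.ε r = r
  clear * -; decide +revert

/-- Lowering the indices of `E^{pd} ∂_d E^{qr}` produces `∂_a E_{bc}`, up to sign. -/
theorem low_term {E Einv : ι → ι → A} (hE : S.AntiSymp E Einv) (a b c : ι) :
    ∑ p, ∑ q, ∑ r, S.lowSgn a b c p q r • (Einv a p * (Einv b q * (Einv c r *
      (sgn ((S.ε p + 1) * (S.ε r + 1)) • ∑ d, E p d * S.D d (E q r)))))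
      = sgn (S.ε a * S.ε c) • S.D a (Einv b c) := by
  have low : ∀ q r, ∑ p, Einv a p * ∑ d, E p d * S.D d (E q r) = S.D a (E q r) := by
    intro q r
    simp only [Finset.mul_sum, ← mul_assoc]
    rw [Finset.sum_comm]
    simp only [← Finset.sum_mul, hE.inv_mul]
    simp
  rw [S.D_Einv hE, Finset.smul_sum, Finset.sum_comm]
  refine Finset.sum_congr rfl fun q _ => ?_
  rw [Finset.smul_sum, Finset.sum_comm]
  refine Finset.sum_congr rfl fun r _ => ?_
  rw [← low q r, Finset.mul_sum, Finset.mul_sum, Finset.smul_sum, Finset.smul_sum]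
  refine Finset.sum_congr rfl fun p _ => ?_
  rw [S.low_cycl hE]
  simp only [mul_smul_comm, smul_smul, lowSgn, ← sgn_add]
  congr 2
  generalize S.ε a = a; generalize S.ε b = b; generalize S.ε c = c
  generalize S.ε p = p; generalize S.ε q = q; generalize S.ε r = r
  clear * -; decide +revert

/-- Lowering the indices of the Jacobiator of `E^{AB}` produces the exterior derivative of
`E_{AB}`. -/
theorem low_jac {E Einv : ι → ι → A} (hE : S.AntiSymp E Einv) (a b c : ι) :
    ∑ p, ∑ q, ∑ r, S.lowSgn a b c p q r • (Einv a p * (Einv b q * (Einv c r *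
      (S.jac E (S.ε p) (S.ε q) (S.ε r) (S.coord p) (S.coord q) (S.coord r)))))
      = sgn (S.ε a * S.ε c) • S.D a (Einv b c)
        + sgn (S.ε b * S.ε a) • S.D b (Einv c a)
        + sgn (S.ε c * S.ε b) • S.D c (Einv a b) := by
  rw [← S.low_term hE a b c, ← S.low_term hE b c a, ← S.low_term hE c a b]
  simp only [jac_coord, Finset.sum_add_distrib, ← Finset.smul_sum, mul_add, smul_add]
  congr 1
  · congr 1
    simp only [S.low_cycl hE a b c]
    rw [Finset.sum_comm]
    exact Finset.sum_congr rfl fun q _ => Finset.sum_comm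
  · simp only [S.low_cycl hE a b c, S.low_cycl hE b c a]
    exact Finset.sum_comm_cycle

theorem eq_zero_of_low {E Einv : ι → ι → A} (hE : S.AntiSymp E Einv) {Z : ι → A}
    (h : ∀ a, ∑ p, Einv a p * Z p = 0) (i : ι) : Z i = 0 := by
  calc Z i = ∑ p, (∑ a, E i a * Einv a p) * Z p := by simp [hE.mul_inv]
    _ = ∑ a, E i a * ∑ p, Einv a p * Z p := by
        simp only [Finset.sum_mul, Finset.mul_sum, mul_assoc]
        exact Finset.sum_comm
    _ = 0 := by simp [h]

theorem ejacobi_iff_closed {E Einv : ι → ι → A} (hE : S.AntiSymp E Einv) :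
    S.EJacobiId E ↔ S.ClosedId Einv := by
  constructor
  · intro H a b c
    rw [← S.low_jac hE]
    refine Finset.sum_eq_zero fun p _ => Finset.sum_eq_zero fun q _ => Finset.sum_eq_zero fun r _ => ?_
    rw [jac_coord, H p q r]
    simp
  · intro H i j k
    rw [← jac_coord]
    set J : ι → ι → ι → A := fun p q r =>
      S.jac E (S.ε p) (S.ε q) (S.ε r) (S.coord p) (S.coord q) (S.coord r)
    -- the lowering sign never couples an index with the one it is lowered to, so the three
    -- contractions can be inverted one at a time
    have h1 : ∀ a b c, ∑ p, Einv a p * (sgn ((S.ε p + 1) * (S.ε b + S.ε c)) •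
        ∑ q, Einv b q * (sgn ((S.ε p + 1) * (S.ε q + 1) + (S.ε q + 1) * S.ε c) •
        ∑ r, Einv c r * (sgn ((S.ε q + 1) * (S.ε r + 1)) • J p q r))) = 0 := by
      intro a b c
      rw [← sgn_smul_eq_zero (S.ε a * S.ε c), ← H a b c, ← S.low_jac hE]
      simp only [Finset.smul_sum, Finset.mul_sum, mul_smul_comm, smul_smul, lowSgn, ← sgn_add]
      refine Finset.sum_congr rfl fun p _ => Finset.sum_congr rfl fun q _ =>
        Finset.sum_congr rfl fun r _ => ?_
      congr 2
      ring
    have h2 : ∀ p b c, _ := fun p b c =>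
      (sgn_smul_eq_zero _ _).1 (S.eq_zero_of_low hE (fun a => h1 a b c) p)
    have h3 : ∀ p q c, _ := fun p q c =>
      (sgn_smul_eq_zero _ _).1 (S.eq_zero_of_low hE (fun b => h2 p b c) q)
    exact (sgn_smul_eq_zero _ _).1 (S.eq_zero_of_low hE (fun c => h3 i j c) k)

/-- For `Δ = Δ_F + ν` with non-degenerate graded-skewsymmetric principal
symbol `E^{AB}`, the third-order terms of `Δ²` vanish iff the antibracket satisfies the
graded Jacobi identity; equivalently, iff the inverse matrix `E_{AB}` is closed. -/
theorem third_order_vanish_iff_jacobi_iff_closed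
    {ι : Type} [Fintype ι] [DecidableEq ι] {A : Type} [Ring A] [Algebra ℚ A]
    (S : SuperAlg ι A) (E Einv : ι → ι → A) (F : ι → A) (ν : A)
    (hE : S.AntiSymp E Einv) (hF : ∀ a, F a ∈ S.hom (S.ε a)) (hν : ν ∈ S.hom 1) :
    (S.ThirdOrderVanish 0 ((S.lap F E + L ν) ∘ₗ (S.lap F E + L ν)) ↔ S.JacobiId E)
    ∧ (S.JacobiId E ↔ S.ClosedId Einv) := by
  refine ⟨?_, (S.jacobi_iff_ejacobi hE).trans (S.ejacobi_iff_closed hE)⟩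
  unfold ThirdOrderVanish JacobiId
  refine forall₃_congr fun p q r => forall₃_congr fun f g h =>
    forall₃_congr fun hf hg hh => ?_
  rw [S.triple_eq_jac hE hF hν hf hg hh, ← L_smul, L_eq_zero, sgn_smul_eq_zero]
  rfl

end SuperAlg
end
end

section
/- For any three (possibly non-flat) line bundle connections F^{(1)}, F^{(2)}, F^{(3)}, the Grassmann-odd quantity ν(F^{(1)};F^{(2)},E) = ((-1)^{ε_A}/4)(∂_A + (F^{(1)}_A+F^{(2)}_A)/2)(E^{AB}(F^{(1)}_B - F^{(2)}_B)) is a coordinate-invariant scalar, equals the coboundary ν^{(0)}_{F^{(1)}} - ν^{(0)}_{F^{(2)}}, and satisfies the 2-cocycle identity ν(F^{(1)};F^{(2)},E) + ν(F^{(2)};F^{(3)},E) + ν(F^{(3)};F^{(1)},E) = 0. -/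
/-!
Write `Λ = δv + X^C ∂_C` for the anomalous variation. It is an even derivation whose commutator
with the coordinate derivatives is `[Λ, ∂_A] = -(∂_A X^C) ∂_C` (`lieTot_mul`, `lieTot_D`). The
difference `G = F¹ - F²` of two connections transforms as a covector, since the inhomogeneous
divergence terms cancel, so `V^A = E^{AB} G_B` transforms as an odd vector field (`lieTot_vec`).
Under `Λ` the divergence `(-1)^{ε_A} ∂_A V^A` then changes by `(-1)^{ε_A} (∂_A div X) V^A`
(`lieTot_div`), while the contraction `(-1)^{ε_A} H_A V^A` with the average connection
`H = (F¹ + F²)/2` changes by exactly the opposite amount (`lieTot_contract`). Their sum is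
`4 ν(F¹;F²,E)`, which is therefore invariant.

For the coboundary property, the graded skewsymmetry of `E` makes the pairing
`(-1)^{ε_A} F_A E^{AB} G_B` symmetric in `F` and `G` (`pairing_symm`), so the mixed terms of
`(F¹ + F²) E (F¹ - F²)` cancel. The cocycle identity is the telescoping sum of coboundaries.
-/


open scoped BigOperators

noncomputable section

namespace SuperAlg

section Helpers

theorem parity_cases (p : ZMod 2) : p = 0 ∨ p = 1 := by
  revert p; decide

theorem sgn_mul_self (p : ZMod 2) : sgn p * sgn p = 1 := by
  unfold sgn; split_ifs <;> norm_num

variable {ι : Type} [Fintype ι] [DecidableEq ι] {A : Type} [Ring A] [Algebra ℚ A]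
variable (S : SuperAlg ι A)

/-- The anomalous variation `Λ = δv + X^C ∂_C`: the form variation plus the transport term.
Invariance of a scalar is its vanishing under `Λ`. -/
def lieTot (X : ι → A) (δv : A →ₗ[ℚ] A) : A →ₗ[ℚ] A :=
  δv + ∑ c, L (X c) ∘ₗ S.D c

theorem lieTot_apply (X : ι → A) (δv : A →ₗ[ℚ] A) (f : A) :
    S.lieTot X δv f = δv f + ∑ c, X c * S.D c f := by
  simp [lieTot, L, LinearMap.sum_apply]

/-- `Λ` is an even derivation, because the degree of `X c` matches that of `D c`. -/
theorem lieTot_mul {X : ι → A} {δv : A →ₗ[ℚ] A} (h : S.FormVar X δv) {p : ZMod 2} {f : A}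
    (g : A) (hf : f ∈ S.hom p) :
    S.lieTot X δv (f * g) = S.lieTot X δv f * g + f * S.lieTot X δv g := by
  have key : ∀ c, X c * S.D c (f * g) = X c * S.D c f * g + f * (X c * S.D c g) := by
    intro c
    have hs : sgn (S.ε c * p) * sgn (S.ε c * p) = 1 := sgn_mul_self _
    rw [S.D_leibniz c g hf, mul_add, mul_smul_comm, ← mul_assoc, ← mul_assoc (X c) f,
      S.supercomm (h.X_mem c) hf, smul_mul_assoc, smul_smul, hs, one_smul, mul_assoc f]
  simp only [lieTot_apply, h.deriv, key, Finset.sum_add_distrib, add_mul, mul_add,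
    Finset.sum_mul, Finset.mul_sum]
  abel

/-- The commutator `[Λ, ∂_A] = -(∂_A X^C) ∂_C`. -/
theorem lieTot_D {X : ι → A} {δv : A →ₗ[ℚ] A} (h : S.FormVar X δv) (a : ι) (f : A) :
    S.lieTot X δv (S.D a f) = S.D a (S.lieTot X δv f) - ∑ c, S.D a (X c) * S.D c f := by
  have key : ∀ c, S.D a (X c * S.D c f) = S.D a (X c) * S.D c f + X c * S.D c (S.D a f) := by
    intro c
    have hs : sgn (S.ε a * S.ε c) * sgn (S.ε a * S.ε c) = 1 := sgn_mul_self _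
    rw [S.D_leibniz a _ (h.X_mem c), S.D_comm a c f, mul_smul_comm, smul_smul, hs, one_smul]
  simp only [lieTot_apply, h.commD, map_add, map_sum, key, Finset.sum_add_distrib]
  abel

/-- The components `V^A = E^{AB} G_B` obtained from a covector `G`. -/
def raise (E : ι → ι → A) (G : ι → A) (a : ι) : A := ∑ b, E a b * G b

/-- Raising the index of a covector with `E` gives a quantity transforming as a vector. -/
theorem lieTot_vec {X : ι → A} {δv : A →ₗ[ℚ] A} (h : S.FormVar X δv) {E : ι → ι → A}
    {G : ι → A} (hE : ∀ a b, E a b ∈ S.hom (S.ε a + S.ε b + 1)) (hVE : S.VarE X δv E)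
    (hVG : ∀ a, S.lieTot X δv (G a) = - ∑ b, S.D a (X b) * G b) (a : ι) :
    S.lieTot X δv (raise E G a) =
      ∑ c, sgn (S.ε c * (S.ε a + 1)) • (S.D c (X a) * raise E G c) := by
  have hΛE : ∀ b, S.lieTot X δv (E a b) =
      (∑ c, sgn (S.ε c * (S.ε a + 1)) • (S.D c (X a) * E c b)) + ∑ c, E a c * S.D c (X b) := by
    intro b
    rw [lieTot_apply, hVE a b]; abel
  simp only [raise, map_sum, S.lieTot_mul h _ (hE a _), hΛE, hVG, add_mul, Finset.sum_mul,
    Finset.mul_sum, mul_neg, Finset.sum_add_distrib, Finset.sum_neg_distrib, smul_mul_assoc,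
    Finset.smul_sum, mul_assoc]
  rw [Finset.sum_comm, Finset.sum_comm (f := fun b c => E a c * (S.D c (X b) * G b))]
  abel

/-- The divergence of an odd vector `V` is not a scalar: it changes by the gradient of `div X`
contracted with `V`. -/
theorem lieTot_div {X : ι → A} {δv : A →ₗ[ℚ] A} (h : S.FormVar X δv) {V : ι → A}
    (hV : ∀ a, S.lieTot X δv (V a) = ∑ c, sgn (S.ε c * (S.ε a + 1)) • (S.D c (X a) * V c)) :
    S.lieTot X δv (∑ a, sgn (S.ε a) • S.D a (V a)) =
      ∑ a, sgn (S.ε a) • (S.D a (S.div1 X) * V a) := by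
  have key : ∀ a c, sgn (S.ε a) • sgn (S.ε c * (S.ε a + 1)) • S.D a (S.D c (X a) * V c) =
      sgn (S.ε c) • (sgn (S.ε a) • (S.D c (S.D a (X a)) * V c)) +
        sgn (S.ε c) • (S.D c (X a) * S.D a (V c)) := by
    intro a c
    rw [S.D_leibniz a _ (S.D_mem c (h.X_mem a)), S.D_comm a c]
    simp only [smul_add, smul_smul, smul_mul_assoc]
    congr 2 <;>
    · generalize S.ε a = p; generalize S.ε c = q
      rcases parity_cases p with rfl | rfl <;> rcases parity_cases q with rfl | rfl <;>
      simp [sgn, CharTwo.add_self_eq_zero]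
  simp only [map_sum, map_smul, S.lieTot_D h, hV, smul_sub, Finset.smul_sum,
    Finset.sum_sub_distrib, key, Finset.sum_add_distrib, div1, Finset.sum_mul, smul_mul_assoc]
  rw [Finset.sum_comm, Finset.sum_comm (f := fun a c => sgn (S.ε c) • (S.D c (X a) * S.D a (V c)))]
  abel

/-- Contracting `V` with a quantity `H` that transforms as a `k`-fold multiple of a connection:
only the inhomogeneous term survives. -/
theorem lieTot_contract {X : ι → A} {δv : A →ₗ[ℚ] A} (h : S.FormVar X δv) {V H : ι → A} (k : ℚ)
    (hH : ∀ a, H a ∈ S.hom (S.ε a))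
    (hV : ∀ a, S.lieTot X δv (V a) = ∑ c, sgn (S.ε c * (S.ε a + 1)) • (S.D c (X a) * V c))
    (hΛH : ∀ a, S.lieTot X δv (H a) = - (∑ b, S.D a (X b) * H b) - k • S.D a (S.div1 X)) :
    S.lieTot X δv (∑ a, sgn (S.ε a) • (H a * V a)) =
      - (k • ∑ a, sgn (S.ε a) • (S.D a (S.div1 X) * V a)) := by
  have key : ∀ a c, sgn (S.ε a) • sgn (S.ε c * (S.ε a + 1)) • (H a * (S.D c (X a) * V c)) =
      sgn (S.ε c) • (S.D c (X a) * (H a * V c)) := by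
    intro a c
    rw [← mul_assoc, S.supercomm (hH a) (S.D_mem c (h.X_mem a)), smul_mul_assoc, smul_smul,
      smul_smul, mul_assoc (S.D c (X a))]
    congr 1
    generalize S.ε a = p; generalize S.ε c = q
    rcases parity_cases p with rfl | rfl <;> rcases parity_cases q with rfl | rfl <;>
      simp [sgn, CharTwo.add_self_eq_zero]
  simp only [map_sum, map_smul, S.lieTot_mul h _ (hH _), hV, hΛH, sub_mul, neg_mul, smul_sub,
    smul_add, smul_neg, Finset.smul_sum, Finset.mul_sum, Finset.sum_mul, mul_smul_comm, key,
    Finset.sum_add_distrib, Finset.sum_sub_distrib, Finset.sum_neg_distrib, smul_mul_assoc,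
    mul_assoc, smul_comm k]
  rw [Finset.sum_comm (f := fun a c => sgn (S.ε c) • (S.D c (X a) * (H a * V c)))]
  abel

/-- Graded skewsymmetry of `E` makes the pairing `(-1)^{ε_A} F_A E^{AB} G_B` symmetric. -/
theorem pairing_symm {E : ι → ι → A} {F G : ι → A}
    (hE : ∀ a b, E a b ∈ S.hom (S.ε a + S.ε b + 1))
    (hskew : ∀ a b, E a b = - sgn ((S.ε a + 1) * (S.ε b + 1)) • E b a)
    (hF : ∀ a, F a ∈ S.hom (S.ε a)) (hG : ∀ a, G a ∈ S.hom (S.ε a)) :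
    ∑ a, ∑ b, sgn (S.ε a) • (F a * (E a b * G b)) =
      ∑ a, ∑ b, sgn (S.ε a) • (G a * (E a b * F b)) := by
  rw [Finset.sum_comm]
  refine Finset.sum_congr rfl fun b _ => Finset.sum_congr rfl fun a _ => ?_
  rw [S.supercomm (hF a) (S.mul_mem (hE a b) (hG b)), S.supercomm (hE a b) (hG b), hskew a b]
  simp only [smul_mul_assoc, mul_smul_comm, smul_smul, mul_assoc]
  congr 1
  generalize S.ε a = p; generalize S.ε b = q
  rcases parity_cases p with rfl | rfl <;> rcases parity_cases q with rfl | rfl <;>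
      simp [sgn, CharTwo.add_self_eq_zero]

theorem nu12_eq_coboundary {E : ι → ι → A} {F G : ι → A}
    (hE : ∀ a b, E a b ∈ S.hom (S.ε a + S.ε b + 1))
    (hskew : ∀ a b, E a b = - sgn ((S.ε a + 1) * (S.ε b + 1)) • E b a)
    (hF : ∀ a, F a ∈ S.hom (S.ε a)) (hG : ∀ a, G a ∈ S.hom (S.ε a)) :
    S.nu12 E F G = S.nuF0 E F - S.nuF0 E G := by
  have hs := S.pairing_symm hE hskew hF hG
  simp only [← Finset.smul_sum] at hs
  unfold nu12 nuF0
  rw [← smul_sub]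
  congr 1
  simp only [mul_sub, add_mul, map_sub, smul_add, smul_sub, Finset.sum_add_distrib,
    Finset.sum_sub_distrib, smul_comm _ (1/2 : ℚ), ← Finset.smul_sum, hs]
  abel

/-- `ν(F;G,E)` as a divergence plus a contraction of the single vector `E (F - G)`. -/
theorem nu12_eq_raise (E : ι → ι → A) (F G : ι → A) :
    S.nu12 E F G = (1/4 : ℚ) •
      ((∑ a, sgn (S.ε a) • S.D a (raise E (fun b => F b - G b) a)) +
        (1/2 : ℚ) • ∑ a, sgn (S.ε a) • ((F a + G a) * raise E (fun b => F b - G b) a)) := by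
  simp only [nu12, raise, map_sum, Finset.mul_sum, Finset.smul_sum, smul_add,
    Finset.sum_add_distrib, smul_comm _ (1/2 : ℚ)]

end Helpers

end SuperAlg

namespace SuperAlg

/-- For any three (possibly non-flat) line bundle connections,
`ν(F¹;F²,E)` is a coordinate-invariant scalar (its anomalous variation under an
arbitrary infinitesimal coordinate transformation `δΓ^A = X^A` vanishes), equals the
coboundary `ν_{F¹}^{(0)} - ν_{F²}^{(0)}`, and satisfies the 2-cocycle identity. -/
theorem nu_two_cocycle
    {ι : Type} [Fintype ι] [DecidableEq ι] {A : Type} [Ring A] [Algebra ℚ A]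
    (S : SuperAlg ι A) (E : ι → ι → A) (F1 F2 F3 : ι → A)
    (hE_mem : ∀ a b, E a b ∈ S.hom (S.ε a + S.ε b + 1))
    (hE_skew : ∀ a b, E a b = - sgn ((S.ε a + 1) * (S.ε b + 1)) • E b a)
    (hF1 : ∀ a, F1 a ∈ S.hom (S.ε a)) (hF2 : ∀ a, F2 a ∈ S.hom (S.ε a))
    (hF3 : ∀ a, F3 a ∈ S.hom (S.ε a)) :
    (∀ (X : ι → A) (δv : A →ₗ[ℚ] A), S.FormVar X δv → S.VarE X δv E →
      S.VarF X δv F1 → S.VarF X δv F2 →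
        δv (S.nu12 E F1 F2) + ∑ c, X c * S.D c (S.nu12 E F1 F2) = 0)
    ∧ S.nu12 E F1 F2 = S.nuF0 E F1 - S.nuF0 E F2
    ∧ S.nu12 E F1 F2 + S.nu12 E F2 F3 + S.nu12 E F3 F1 = 0 := by
  have hcob := @nu12_eq_coboundary ι _ _ A _ _ S E
  refine ⟨fun X δv h hVE hV1 hV2 => ?_, hcob hE_mem hE_skew hF1 hF2, ?_⟩
  · have hΛ1 : ∀ a, S.lieTot X δv (F1 a) =
        - (∑ b, S.D a (X b) * F1 b) - S.D a (S.div1 X) := by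
      intro a; rw [lieTot_apply, hV1 a]; abel
    have hΛ2 : ∀ a, S.lieTot X δv (F2 a) =
        - (∑ b, S.D a (X b) * F2 b) - S.D a (S.div1 X) := by
      intro a; rw [lieTot_apply, hV2 a]; abel
    have hV := S.lieTot_vec h (G := fun b => F1 b - F2 b) hE_mem hVE (by
      intro a
      simp only [map_sub, hΛ1, hΛ2, mul_sub, Finset.sum_sub_distrib]
      abel)
    have hdiv := S.lieTot_div h hV
    have hcon := S.lieTot_contract h (H := fun a => F1 a + F2 a) 2
      (fun a => Submodule.add_mem _ (hF1 a) (hF2 a)) hV (by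
        intro a
        simp only [map_add, hΛ1, hΛ2, mul_add, Finset.sum_add_distrib, two_smul]
        abel)
    rw [← lieTot_apply, nu12_eq_raise, map_smul, map_add, map_smul, hdiv, hcon, smul_neg,
      smul_smul]
    norm_num
  · rw [hcob hE_mem hE_skew hF1 hF2, hcob hE_mem hE_skew hF2 hF3, hcob hE_mem hE_skew hF3 hF1]
    abel

end SuperAlg
end
end
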